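/- arXiv:2505.10301 — 7 statements merged into one kernel-verified Lean document; each statement's English description precedes it below -/
import Mathlib

section
/- Let r ≥ 1 be an integer. If there exists t ∈ F = ℚ(v) with t² = (v^{2r} − v^{−2r})/(v² − v^{−2}), then r = 1 and t = 1 or t = −1. Equivalently, the element v^{2(r−1)} + v^{2(r−3)} + ⋯ + v^{−2(r−1)} of F is a square in F if and only if r = 1. (This is the field-theoretic core of Proposition 3.6 and Proposition 5.2 of the paper.) -/
open scoped BigOperators

noncomputable section

namespace Stmt3

/-- The field `F = ℚ(v)` of rational functions. -/
abbrev F : Type := RatFunc ℚ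

/-- The element `v` of `F`. -/
noncomputable def v : F := RatFunc.X

open Polynomial in
theorem poly_core (r : ℕ) (hr : 1 ≤ r) (q : ℚ[X]) (h : q ^ 2 * (X ^ 4 - 1) = X ^ (4 * r) - 1) :
    r = 1 := by
  have hs : (X ^ (4 * r) - 1 : ℚ[X]).Separable := by
    rw [X_pow_sub_one_separable_iff]
    exact_mod_cast (by omega : 4 * r ≠ 0)
  have hu : IsUnit q := hs.squarefree q ⟨X ^ 4 - 1, by rw [← h]; ring⟩
  have hd := congrArg natDegree h
  have h4 : (X ^ 4 - 1 : ℚ[X]).natDegree = 4 := natDegree_X_pow_sub_C (R := ℚ) (n := 4) (r := 1)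
  have h4r : (X ^ (4 * r) - 1 : ℚ[X]).natDegree = 4 * r :=
    natDegree_X_pow_sub_C (R := ℚ) (n := 4 * r) (r := 1)
  have hne : (X ^ 4 - 1 : ℚ[X]) ≠ 0 := by
    intro h0
    rw [h0] at h4
    simp at h4
  rw [natDegree_mul (pow_ne_zero _ hu.ne_zero) hne, h4, h4r, natDegree_pow,
    natDegree_eq_zero_of_isUnit hu] at hd
  omega

theorem v_ne : v ≠ 0 := RatFunc.X_ne_zero

theorem v_map : algebraMap (Polynomial ℚ) F Polynomial.X = v := RatFunc.algebraMap_X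

theorem v4_ne : v ^ 4 - 1 ≠ 0 := by
  have h4 : (Polynomial.X ^ 4 - 1 : Polynomial ℚ).natDegree = 4 :=
    Polynomial.natDegree_X_pow_sub_C (R := ℚ) (n := 4) (r := 1)
  have hne : (Polynomial.X ^ 4 - 1 : Polynomial ℚ) ≠ 0 := by
    intro h0
    rw [h0] at h4
    simp at h4
  have := (map_ne_zero_iff (algebraMap (Polynomial ℚ) F)
    (IsFractionRing.injective (Polynomial ℚ) F)).2 hne
  simpa only [map_sub, map_pow, map_one, v_map] using this

theorem v2_eq : (v ^ (2:ℤ) - v ^ (-2:ℤ)) * v ^ 2 = v ^ 4 - 1 := by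
  have := v_ne
  rw [zpow_neg]
  norm_cast
  field_simp

theorem v2_ne : v ^ (2:ℤ) - v ^ (-2:ℤ) ≠ 0 := by
  intro h
  apply v4_ne
  rw [← v2_eq, h, zero_mul]

theorem tele (a : ℤ) (n : ℕ) :
    (∑ k ∈ Finset.range n, v ^ (a - 4 * (k : ℤ))) * (v ^ (2:ℤ) - v ^ (-2:ℤ))
      = v ^ (a + 2) - v ^ (a + 2 - 4 * (n : ℤ)) := by
  induction n with
  | zero => simp
  | succ n ih =>
    rw [Finset.sum_range_succ, add_mul, ih, mul_sub, ← zpow_add₀ v_ne, ← zpow_add₀ v_ne]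
    have e1 : a - 4 * (n : ℤ) + 2 = a + 2 - 4 * (n : ℤ) := by ring
    have e2 : a - 4 * (n : ℤ) + -2 = a + 2 - 4 * ((n + 1 : ℕ) : ℤ) := by push_cast; ring
    rw [e1, e2]
    ring

theorem field_core (r : ℕ) (hr : 1 ≤ r) (t : F)
    (h : t ^ 2 * (v ^ (2:ℤ) - v ^ (-2:ℤ)) = v ^ (2 * (r : ℤ)) - v ^ (-(2 * (r : ℤ)))) :
    r = 1 := by
  obtain ⟨m, rfl⟩ : ∃ m, r = m + 1 := ⟨r - 1, by omega⟩
  have hv := v_ne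
  have h1 : (t * v ^ m) ^ 2 * (v ^ 4 - 1) = v ^ (4 * (m + 1)) - 1 := by
    have e : (v ^ (2 * ((m + 1 : ℕ) : ℤ)) - v ^ (-(2 * ((m + 1 : ℕ) : ℤ)))) * v ^ (2 * (m + 1))
        = v ^ (4 * (m + 1)) - 1 := by
      rw [zpow_neg]
      norm_cast
      rw [sub_mul, inv_mul_cancel₀ (pow_ne_zero _ hv)]
      ring
    rw [← e, ← h, ← v2_eq]
    ring
  have hP : (t * v ^ m) ^ 2 = algebraMap (Polynomial ℚ) F
      (∑ k ∈ Finset.range (m + 1), (Polynomial.X ^ 4) ^ k) := by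
    apply mul_right_cancel₀ v4_ne
    rw [h1]
    simp only [map_sum, map_pow, v_map]
    rw [geom_sum_mul, pow_mul]
  have hint : IsIntegral (Polynomial ℚ) (t * v ^ m) := by
    apply IsIntegral.of_pow (n := 2) (by norm_num)
    rw [hP]
    exact isIntegral_algebraMap
  obtain ⟨q, hq⟩ := IsIntegrallyClosed.isIntegral_iff.1 hint
  apply poly_core (m + 1) hr q
  apply IsFractionRing.injective (Polynomial ℚ) F
  simp only [map_mul, map_sub, map_pow, map_one, v_map, hq]
  exact h1

/-- field-theoretic core of Propositions 3.6 and 5.2: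
if `t² = (v^{2r} − v^{−2r})/(v² − v^{−2})` then `r = 1` and `t = ±1`; equivalently,
`v^{2(r−1)} + v^{2(r−3)} + ⋯ + v^{−2(r−1)}` is a square in `F` iff `r = 1`. -/
theorem square_of_quantum_integer (r : ℕ) (hr : 1 ≤ r) :
    (∀ t : F, t ^ 2 = (v ^ (2 * (r : ℤ)) - v ^ (-(2 * (r : ℤ)))) / (v ^ (2:ℤ) - v ^ (-2:ℤ)) →
      r = 1 ∧ (t = 1 ∨ t = -1)) ∧
    ((∃ t : F, t ^ 2 = ∑ k ∈ Finset.range r, v ^ (2 * ((r : ℤ) - 1) - 4 * (k : ℤ))) ↔ r = 1) := by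
  refine ⟨fun t ht => ?_, ⟨fun ⟨t, ht⟩ => ?_, fun h => ?_⟩⟩
  · have h1 : r = 1 := field_core r hr t (by rw [ht, div_mul_cancel₀ _ v2_ne])
    refine ⟨h1, ?_⟩
    subst h1
    have e : t ^ 2 = 1 := by
      rw [ht]
      exact div_self v2_ne
    exact by simpa using e
  · refine field_core r hr t ?_
    rw [ht, tele]
    congr 2 <;> ring
  · subst h
    exact ⟨1, by simp⟩

end Stmt3
end
end

section
/- In U_v = U_v(q_n), for every 1 ≤ j ≤ n−1 the following identities hold: (i) Ē_j = −v·K_{j+1}K̄_{j+1}E_j + v^{−1}·E_jK_{j+1}K̄_{j+1}; (ii) F̄_j = v·K_{j+1}^{−1}K̄_{j+1}F_j − v^{−1}·F_jK_{j+1}^{−1}K̄_{j+1}; (iii) K̄_j = v·E_jK_{j+1}^{−1}K̄_{j+1}F_jK_{j+1} − v^{−1}·E_jF_jK_{j+1}^{−1}K̄_{j+1}K_{j+1} − v·K_{j+1}^{−1}K̄_{j+1}F_jE_jK_{j+1} + v^{−1}·F_jK_{j+1}^{−1}K̄_{j+1}E_jK_{j+1} + K_j^{−1}K̄_{j+1}K_{j+1}.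 In particular, all the odd generators Ē_j, F̄_j, K̄_j (1 ≤ j ≤ n−1) are expressible in terms of the even generators and K̄_n. (Remark 2.3 of the paper.) -/
open scoped BigOperators

noncomputable section

namespace QueerPaper

/-- The field `F = ℚ(v)` of rational functions. -/
abbrev F : Type := RatFunc ℚ

/-- The element `v` of `F`. -/
noncomputable def v : F := RatFunc.X

lemma v_ne_zero : v ≠ 0 := RatFunc.X_ne_zero

/-- `v` as a unit of `F`. -/
noncomputable def vU : Fˣ := Units.mk0 v v_ne_zero

/-- Generators of the quantum queer superalgebra `U_v(q_n)`:
`K_i, K_i⁻¹, K̄_i` for `1 ≤ i ≤ n` (here indexed by `Fin n`, 0-based) and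
`E_j, Ē_j, F_j, F̄_j` for `1 ≤ j ≤ n−1` (here indexed by `Fin (n-1)`, 0-based). -/
inductive QGen (n : ℕ) : Type
  | K : Fin n → QGen n
  | Kinv : Fin n → QGen n
  | Kb : Fin n → QGen n
  | E : Fin (n - 1) → QGen n
  | Eb : Fin (n - 1) → QGen n
  | Fg : Fin (n - 1) → QGen n
  | Fb : Fin (n - 1) → QGen n

/-- The free `F`-algebra on the generators. -/
abbrev FA (n : ℕ) : Type := FreeAlgebra F (QGen n)

namespace Pre

variable (n : ℕ)

def K (i : Fin n) : FA n := FreeAlgebra.ι F (QGen.K i)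
def Kinv (i : Fin n) : FA n := FreeAlgebra.ι F (QGen.Kinv i)
def Kb (i : Fin n) : FA n := FreeAlgebra.ι F (QGen.Kb i)
def E (j : Fin (n - 1)) : FA n := FreeAlgebra.ι F (QGen.E j)
def Eb (j : Fin (n - 1)) : FA n := FreeAlgebra.ι F (QGen.Eb j)
def Fg (j : Fin (n - 1)) : FA n := FreeAlgebra.ι F (QGen.Fg j)
def Fb (j : Fin (n - 1)) : FA n := FreeAlgebra.ι F (QGen.Fb j)

end Pre

/-- `Fin (n-1) → Fin n`, preserving the underlying index (paper index `j`). -/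
def finL {n : ℕ} (j : Fin (n - 1)) : Fin n := ⟨(j : ℕ), by have := j.2; omega⟩

/-- `Fin (n-1) → Fin n`, shifting the index by one (paper index `j+1`). -/
def finR {n : ℕ} (j : Fin (n - 1)) : Fin n := ⟨(j : ℕ) + 1, by have := j.2; omega⟩

/-- The pairing `⟨i,j⟩ = δ_{i,j} − δ_{i,j+1}` (in the paper's 1-based indexing;
here both indices are 0-based). -/
def pr {n : ℕ} (i : Fin n) (j : Fin (n - 1)) : ℤ :=
  (if (i : ℕ) = (j : ℕ) then 1 else 0) - (if (i : ℕ) = (j : ℕ) + 1 then 1 else 0)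

/-- Kronecker delta with values in `F`. -/
def dlt {m : ℕ} (i j : Fin m) : F := if i = j then 1 else 0

open Pre in
/-- The defining relations (QQ1)–(QQ6) of `U_v(q_n)`. -/
inductive qRel (n : ℕ) : FA n → FA n → Prop
  -- (QQ1)
  | KKinv (i : Fin n) : qRel n (K n i * Kinv n i) 1
  | KinvK (i : Fin n) : qRel n (Kinv n i * K n i) 1
  | KK (i j : Fin n) : qRel n (K n i * K n j) (K n j * K n i)
  | KKb (i j : Fin n) : qRel n (K n i * Kb n j) (Kb n j * K n i)
  | KbKb (i j : Fin n) :
      qRel n (Kb n i * Kb n j + Kb n j * Kb n i)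
        ((dlt i j * (2 / (v ^ 2 - v⁻¹ ^ 2))) • (K n i ^ 2 - Kinv n i ^ 2))
  -- (QQ2)
  | KE (i : Fin n) (j : Fin (n - 1)) :
      qRel n (K n i * E n j) ((v ^ pr i j) • (E n j * K n i))
  | KEb (i : Fin n) (j : Fin (n - 1)) :
      qRel n (K n i * Eb n j) ((v ^ pr i j) • (Eb n j * K n i))
  | KF (i : Fin n) (j : Fin (n - 1)) :
      qRel n (K n i * Fg n j) ((v ^ (-pr i j)) • (Fg n j * K n i))
  | KFb (i : Fin n) (j : Fin (n - 1)) :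
      qRel n (K n i * Fb n j) ((v ^ (-pr i j)) • (Fb n j * K n i))
  -- (QQ3)
  | KbE (j : Fin (n - 1)) :
      qRel n (Kb n (finL j) * E n j - v • (E n j * Kb n (finL j))) (Eb n j * Kinv n (finL j))
  | KbE' (j : Fin (n - 1)) :
      qRel n (v • (Kb n (finR j) * E n j) - E n j * Kb n (finR j)) (-(Kinv n (finR j) * Eb n j))
  | KbF (j : Fin (n - 1)) :
      qRel n (Kb n (finL j) * Fg n j - v • (Fg n j * Kb n (finL j))) (-(Fb n j * K n (finL j)))
  | KbF' (j : Fin (n - 1)) :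
      qRel n (v • (Kb n (finR j) * Fg n j) - Fg n j * Kb n (finR j)) (K n (finR j) * Fb n j)
  | KbEb (j : Fin (n - 1)) :
      qRel n (Kb n (finL j) * Eb n j + v • (Eb n j * Kb n (finL j))) (E n j * Kinv n (finL j))
  | KbEb' (j : Fin (n - 1)) :
      qRel n (v • (Kb n (finR j) * Eb n j) + Eb n j * Kb n (finR j)) (Kinv n (finR j) * E n j)
  | KbFb (j : Fin (n - 1)) :
      qRel n (Kb n (finL j) * Fb n j + v • (Fb n j * Kb n (finL j))) (Fg n j * K n (finL j))
  | KbFb' (j : Fin (n - 1)) :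
      qRel n (v • (Kb n (finR j) * Fb n j) + Fb n j * Kb n (finR j)) (K n (finR j) * Fg n j)
  | KbEcomm (i : Fin n) (j : Fin (n - 1)) (h1 : (i : ℕ) ≠ (j : ℕ)) (h2 : (i : ℕ) ≠ (j : ℕ) + 1) :
      qRel n (Kb n i * E n j - E n j * Kb n i) 0
  | KbFcomm (i : Fin n) (j : Fin (n - 1)) (h1 : (i : ℕ) ≠ (j : ℕ)) (h2 : (i : ℕ) ≠ (j : ℕ) + 1) :
      qRel n (Kb n i * Fg n j - Fg n j * Kb n i) 0
  | KbEbcomm (i : Fin n) (j : Fin (n - 1)) (h1 : (i : ℕ) ≠ (j : ℕ)) (h2 : (i : ℕ) ≠ (j : ℕ) + 1) :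
      qRel n (Kb n i * Eb n j + Eb n j * Kb n i) 0
  | KbFbcomm (i : Fin n) (j : Fin (n - 1)) (h1 : (i : ℕ) ≠ (j : ℕ)) (h2 : (i : ℕ) ≠ (j : ℕ) + 1) :
      qRel n (Kb n i * Fb n j + Fb n j * Kb n i) 0
  -- (QQ4)
  | EF (i j : Fin (n - 1)) :
      qRel n (E n i * Fg n j - Fg n j * E n i)
        ((dlt i j * (1 / (v - v⁻¹))) •
          (K n (finL i) * Kinv n (finR i) - Kinv n (finL i) * K n (finR i)))
  | EbFb (i j : Fin (n - 1)) :
      qRel n (Eb n i * Fb n j + Fb n j * Eb n i)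
        (dlt i j •
          ((1 / (v - v⁻¹)) • (K n (finL i) * K n (finR i) - Kinv n (finL i) * Kinv n (finR i))
            + (v - v⁻¹) • (Kb n (finL i) * Kb n (finR i))))
  | EFb (i j : Fin (n - 1)) :
      qRel n (E n i * Fb n j - Fb n j * E n i)
        (dlt i j • (Kinv n (finR i) * Kb n (finL i) - Kb n (finR i) * Kinv n (finL i)))
  | EbF (i j : Fin (n - 1)) :
      qRel n (Eb n i * Fg n j - Fg n j * Eb n i)
        (dlt i j • (K n (finR i) * Kb n (finL i) - Kb n (finR i) * K n (finL i)))
  -- (QQ5)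
  | EbSq (i : Fin (n - 1)) :
      qRel n (Eb n i ^ 2) ((-((v - v⁻¹) / (v + v⁻¹))) • (E n i ^ 2))
  | FbSq (i : Fin (n - 1)) :
      qRel n (Fb n i ^ 2) (((v - v⁻¹) / (v + v⁻¹)) • (Fg n i ^ 2))
  | EEbcomm (i j : Fin (n - 1)) (h1 : (i : ℕ) ≠ (j : ℕ) + 1) (h2 : (j : ℕ) ≠ (i : ℕ) + 1) :
      qRel n (E n i * Eb n j - Eb n j * E n i) 0
  | FFbcomm (i j : Fin (n - 1)) (h1 : (i : ℕ) ≠ (j : ℕ) + 1) (h2 : (j : ℕ) ≠ (i : ℕ) + 1) :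
      qRel n (Fg n i * Fb n j - Fb n j * Fg n i) 0
  | EEcomm (i j : Fin (n - 1)) (h : (i : ℕ) > (j : ℕ) + 1 ∨ (j : ℕ) > (i : ℕ) + 1) :
      qRel n (E n i * E n j - E n j * E n i) 0
  | FFcomm (i j : Fin (n - 1)) (h : (i : ℕ) > (j : ℕ) + 1 ∨ (j : ℕ) > (i : ℕ) + 1) :
      qRel n (Fg n i * Fg n j - Fg n j * Fg n i) 0
  | EbEbanti (i j : Fin (n - 1)) (h : (i : ℕ) > (j : ℕ) + 1 ∨ (j : ℕ) > (i : ℕ) + 1) :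
      qRel n (Eb n i * Eb n j + Eb n j * Eb n i) 0
  | FbFbanti (i j : Fin (n - 1)) (h : (i : ℕ) > (j : ℕ) + 1 ∨ (j : ℕ) > (i : ℕ) + 1) :
      qRel n (Fb n i * Fb n j + Fb n j * Fb n i) 0
  | EEnext (j : Fin (n - 1)) (h : (j : ℕ) + 1 < n - 1) :
      qRel n (E n j * E n ⟨(j : ℕ) + 1, h⟩ - v • (E n ⟨(j : ℕ) + 1, h⟩ * E n j))
        (Eb n j * Eb n ⟨(j : ℕ) + 1, h⟩ + v • (Eb n ⟨(j : ℕ) + 1, h⟩ * Eb n j))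
  | EEbnext (j : Fin (n - 1)) (h : (j : ℕ) + 1 < n - 1) :
      qRel n (E n j * Eb n ⟨(j : ℕ) + 1, h⟩ - v • (Eb n ⟨(j : ℕ) + 1, h⟩ * E n j))
        (Eb n j * E n ⟨(j : ℕ) + 1, h⟩ - v • (E n ⟨(j : ℕ) + 1, h⟩ * Eb n j))
  | FFnext (j : Fin (n - 1)) (h : (j : ℕ) + 1 < n - 1) :
      qRel n (Fg n j * Fg n ⟨(j : ℕ) + 1, h⟩ - v • (Fg n ⟨(j : ℕ) + 1, h⟩ * Fg n j))
        (-(Fb n j * Fb n ⟨(j : ℕ) + 1, h⟩ + v • (Fb n ⟨(j : ℕ) + 1, h⟩ * Fb n j)))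
  | FFbnext (j : Fin (n - 1)) (h : (j : ℕ) + 1 < n - 1) :
      qRel n (Fg n j * Fb n ⟨(j : ℕ) + 1, h⟩ - v • (Fb n ⟨(j : ℕ) + 1, h⟩ * Fg n j))
        (Fb n j * Fg n ⟨(j : ℕ) + 1, h⟩ - v • (Fg n ⟨(j : ℕ) + 1, h⟩ * Fb n j))
  -- (QQ6)
  | serreE (i j : Fin (n - 1)) (h : (i : ℕ) = (j : ℕ) + 1 ∨ (j : ℕ) = (i : ℕ) + 1) :
      qRel n (E n i ^ 2 * E n j - (v + v⁻¹) • (E n i * E n j * E n i) + E n j * E n i ^ 2) 0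
  | serreF (i j : Fin (n - 1)) (h : (i : ℕ) = (j : ℕ) + 1 ∨ (j : ℕ) = (i : ℕ) + 1) :
      qRel n (Fg n i ^ 2 * Fg n j - (v + v⁻¹) • (Fg n i * Fg n j * Fg n i) + Fg n j * Fg n i ^ 2) 0
  | serreEEb (i j : Fin (n - 1)) (h : (i : ℕ) = (j : ℕ) + 1 ∨ (j : ℕ) = (i : ℕ) + 1) :
      qRel n (E n i ^ 2 * Eb n j - (v + v⁻¹) • (E n i * Eb n j * E n i) + Eb n j * E n i ^ 2) 0
  | serreFFb (i j : Fin (n - 1)) (h : (i : ℕ) = (j : ℕ) + 1 ∨ (j : ℕ) = (i : ℕ) + 1) :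
      qRel n (Fg n i ^ 2 * Fb n j - (v + v⁻¹) • (Fg n i * Fb n j * Fg n i) + Fb n j * Fg n i ^ 2) 0

/-- The quantum queer superalgebra `U_v(q_n)`, as the quotient of the free algebra
by the two-sided ideal generated by the relations (QQ1)–(QQ6). -/
abbrev Uq (n : ℕ) : Type := RingQuot (qRel n)

/-- The quotient map. -/
noncomputable def mk (n : ℕ) : FA n →ₐ[F] Uq n := RingQuot.mkAlgHom F (qRel n)

noncomputable def uK (n : ℕ) (i : Fin n) : Uq n := mk n (Pre.K n i)
noncomputable def uKinv (n : ℕ) (i : Fin n) : Uq n := mk n (Pre.Kinv n i)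
noncomputable def uKb (n : ℕ) (i : Fin n) : Uq n := mk n (Pre.Kb n i)
noncomputable def uE (n : ℕ) (j : Fin (n - 1)) : Uq n := mk n (Pre.E n j)
noncomputable def uEb (n : ℕ) (j : Fin (n - 1)) : Uq n := mk n (Pre.Eb n j)
noncomputable def uF (n : ℕ) (j : Fin (n - 1)) : Uq n := mk n (Pre.Fg n j)
noncomputable def uFb (n : ℕ) (j : Fin (n - 1)) : Uq n := mk n (Pre.Fb n j)

section Modules

variable (n : ℕ) (M : Type) [AddCommGroup M] [Module F M]
  [Module (Uq n) M] [IsScalarTower F (Uq n) M]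

lemma uq_smul_f_smul (u : Uq n) (c : F) (m : M) : u • (c • m) = c • (u • m) := by
  rw [← algebraMap_smul (Uq n) c m, ← mul_smul, ← Algebra.commutes, mul_smul,
    algebraMap_smul]

/-- The weight space `M_ω = {m ∈ M | K_i m = ω_i m for all i}`. -/
noncomputable def weightSpace (ω : Fin n → Fˣ) : Submodule F M where
  carrier := {m | ∀ i : Fin n, uK n i • m = (ω i : F) • m}
  add_mem' := by
    intro a b ha hb i
    rw [smul_add, ha i, hb i, smul_add]
  zero_mem' := by
    intro i; rw [smul_zero, smul_zero]
  smul_mem' := by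
    intro c m hm i
    rw [uq_smul_f_smul, hm i, smul_comm]

/-- `ω` is a weight of `M` if the weight space `M_ω` is nonzero. -/
def IsWeight (ω : Fin n → Fˣ) : Prop := weightSpace n M ω ≠ ⊥

/-- `M` is a weight module if it is the internal direct sum of its weight spaces. -/
def IsWeightModule : Prop :=
  iSupIndep (fun ω : {ω : Fin n → Fˣ // IsWeight n M ω} => weightSpace n M ω.1) ∧
    (⨆ ω : {ω : Fin n → Fˣ // IsWeight n M ω}, weightSpace n M ω.1) = ⊤

/-- `m` is a highest weight vector of weight `ω`. -/
def IsHWVector (ω : Fin n → Fˣ) (m : M) : Prop :=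
  m ≠ 0 ∧ (∀ i : Fin n, uK n i • m = (ω i : F) • m) ∧
    ∀ j : Fin (n - 1), uE n j • m = 0 ∧ uEb n j • m = 0

/-- `M` is a highest weight module of highest weight `ω`. -/
def IsHWModule (ω : Fin n → Fˣ) : Prop :=
  ∃ m : M, IsHWVector n M ω m ∧ Submodule.span (Uq n) {m} = ⊤

end Modules

/-- The abstract computation behind Remark 2.3. -/
lemma odd_aux {A : Type*} [Ring A] [Algebra F A] (c : F) (hc : c ≠ 0)
    (K k B L l A' E Eb G Gb : A)
    (h1 : K * k = 1) (h2 : k * K = 1) (hKA : K * A' = A' * K)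
    (hL1 : L * l = 1) (hL2 : l * L = 1) (hLB : L * B = B * L)
    (hKE : K * E = c⁻¹ • (E * K)) (hKG : K * G = c • (G * K))
    (hE : c • (B * E) - E * B = -(k * Eb)) (hG : c • (B * G) - G * B = K * Gb)
    (hEG : E * Gb - Gb * E = k * A' - B * l) :
    Eb = -(c • (K * B * E)) + c⁻¹ • (E * (K * B)) ∧
    Gb = c • (k * B * G) - c⁻¹ • (G * (k * B)) ∧
    A' = c • (E * k * B * G * K) - c⁻¹ • (E * G * k * B * K)
      - c • (k * B * G * E * K) + c⁻¹ • (G * k * B * E * K) + l * B * K := by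
  have hkG : k * G = c⁻¹ • (G * k) := by
    have : k * (K * G) * k = c • (k * (G * K) * k) := by rw [hKG]; simp
    have e1 : k * (K * G) * k = G * k := by rw [← mul_assoc, h2, one_mul]
    have e2 : k * (G * K) * k = k * G := by rw [mul_assoc, mul_assoc, h1, mul_one]
    rw [e1, e2] at this
    rw [this, smul_smul, inv_mul_cancel₀ hc, one_smul]
  have hkA : k * A' = A' * k := by
    have : k * (K * A') * k = k * (A' * K) * k := by rw [hKA]
    rw [← mul_assoc k K, h2, one_mul, mul_assoc, mul_assoc, h1, mul_one] at this
    exact this.symm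
  have hlB : l * B = B * l := by
    have : l * (L * B) * l = l * (B * L) * l := by rw [hLB]
    rw [← mul_assoc l L, hL2, one_mul, mul_assoc, mul_assoc, hL1, mul_one] at this
    exact this.symm
  have hGb : Gb = c • (k * B * G) - c⁻¹ • (G * (k * B)) := by
    have : k * (c • (B * G) - G * B) = Gb := by rw [hG, ← mul_assoc, h2, one_mul]
    rw [← this, mul_sub, mul_smul_comm, ← mul_assoc k G, hkG, smul_mul_assoc, mul_assoc k,
      mul_assoc G]
  refine ⟨?_, hGb, ?_⟩
  · have : K * (c • (B * E) - E * B) = -Eb := by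
      rw [hE, mul_neg, ← mul_assoc, h1, one_mul]
    rw [← neg_neg Eb, ← this, mul_sub, mul_smul_comm, ← mul_assoc K E, hKE, smul_mul_assoc,
      mul_assoc K, mul_assoc E]
    abel
  · have e : A' = (E * Gb - Gb * E + l * B) * K := by
      rw [hEG, hlB, sub_add_cancel, hkA, mul_assoc, h2, mul_one]
    rw [e, hGb]
    simp only [mul_sub, sub_mul, add_mul, mul_smul_comm, smul_mul_assoc, mul_assoc]
    abel

/-- Remark 2.3: the odd generators `Ē_j`, `F̄_j`, `K̄_j` are expressible
in terms of the even generators and `K̄_{j+1}`. -/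
theorem odd_generators_from_even (n : ℕ) (hn : 2 ≤ n) (j : Fin (n - 1)) :
    uEb n j = -(v • (uK n (finR j) * uKb n (finR j) * uE n j))
        + v⁻¹ • (uE n j * (uK n (finR j) * uKb n (finR j))) ∧
    uFb n j = v • (uKinv n (finR j) * uKb n (finR j) * uF n j)
        - v⁻¹ • (uF n j * (uKinv n (finR j) * uKb n (finR j))) ∧
    uKb n (finL j) =
      v • (uE n j * uKinv n (finR j) * uKb n (finR j) * uF n j * uK n (finR j))
        - v⁻¹ • (uE n j * uF n j * uKinv n (finR j) * uKb n (finR j) * uK n (finR j))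
        - v • (uKinv n (finR j) * uKb n (finR j) * uF n j * uE n j * uK n (finR j))
        + v⁻¹ • (uF n j * uKinv n (finR j) * uKb n (finR j) * uE n j * uK n (finR j))
        + uKinv n (finL j) * uKb n (finR j) * uK n (finR j) := by
  have rel : ∀ {a b : FA n}, qRel n a b → mk n a = mk n b :=
    fun h => RingQuot.mkAlgHom_rel F h
  unfold uK uKinv uKb uE uEb uF uFb
  have p : pr (finR j) j = -1 := by simp [pr, finR]
  refine odd_aux v v_ne_zero _ _ _ (mk n (Pre.K n (finL j))) (mk n (Pre.Kinv n (finL j))) _ _ _ _ _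
    ?_ ?_ ?_ ?_ ?_ ?_ ?_ ?_ ?_ ?_ ?_
  · simpa using rel (.KKinv (finR j))
  · simpa using rel (.KinvK (finR j))
  · simpa using rel (.KKb (finR j) (finL j))
  · simpa using rel (.KKinv (finL j))
  · simpa using rel (.KinvK (finL j))
  · simpa using rel (.KKb (finL j) (finR j))
  · simpa [p] using rel (.KE (finR j) j)
  · simpa [p] using rel (.KF (finR j) j)
  · simpa using rel (.KbE' j)
  · simpa using rel (.KbF' j)
  · simpa [dlt] using rel (.EFb j j)

end QueerPaper
end
end

section
/- Let M be a nonzero finite-dimensional simple U_v-module which is a weight module. Then wt(M) has exactly one maximal element ω with respect to the partial order ≥, and M is a highest weight module of highest weight ω; in particular E_j·M_ω = 0 and Ē_j·M_ω = 0 for all 1 ≤ j ≤ n−1, and M = U_v·m for some nonzero m ∈ M_ω. (Proposition 3.3 of the paper.) -/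
open scoped BigOperators

noncomputable section

namespace QueerPaper

/-- The partial order on weights: `ω ≥ γ` iff `ω = v^β γ` for some `β ∈ Q⁺`,
i.e. there is `b : ℕ → ℕ` with `b 0 = 0`, `b n = 0` and
`ω_i = v^{b_i − b_{i−1}} γ_i` for all `i` (1-based paper indexing). -/
def wge (n : ℕ) (ω γ : Fin n → Fˣ) : Prop :=
  ∃ b : ℕ → ℕ, b 0 = 0 ∧ b n = 0 ∧
    ∀ i : Fin n, ω i = (vU ^ (b ((i : ℕ) + 1)) * (vU ^ (b (i : ℕ)))⁻¹) * γ i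

/-- Strict order on weights. -/
def wgt (n : ℕ) (ω γ : Fin n → Fˣ) : Prop := wge n ω γ ∧ ω ≠ γ

/-- `ω` is a maximal weight of `M`: it is a weight and no weight of `M` is strictly
bigger. -/
def IsMaximalWeight (n : ℕ) (M : Type) [AddCommGroup M] [Module F M]
    [Module (Uq n) M] [IsScalarTower F (Uq n) M] (ω : Fin n → Fˣ) : Prop :=
  IsWeight n M ω ∧ ∀ γ : Fin n → Fˣ, IsWeight n M γ → ¬ wgt n γ ω

lemma rel {n : ℕ} {a b : FA n} (h : qRel n a b) : mk n a = mk n b :=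
  RingQuot.mkAlgHom_rel F h

lemma mkK (n : ℕ) (i) : mk n (Pre.K n i) = uK n i := rfl
lemma mkKinv (n : ℕ) (i) : mk n (Pre.Kinv n i) = uKinv n i := rfl
lemma mkKb (n : ℕ) (i) : mk n (Pre.Kb n i) = uKb n i := rfl
lemma mkE (n : ℕ) (i) : mk n (Pre.E n i) = uE n i := rfl
lemma mkEb (n : ℕ) (i) : mk n (Pre.Eb n i) = uEb n i := rfl
lemma mkF (n : ℕ) (i) : mk n (Pre.Fg n i) = uF n i := rfl
lemma mkFb (n : ℕ) (i) : mk n (Pre.Fb n i) = uFb n i := rfl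

lemma vU_pow_inj {a b : ℕ} (h : vU ^ a = vU ^ b) : a = b := by
  have h1 : (RatFunc.X : RatFunc ℚ) ^ a = RatFunc.X ^ b := by
    simpa [vU, v] using congrArg (fun u : Fˣ => (u : F)) h
  rw [← RatFunc.algebraMap_X, ← map_pow, ← map_pow] at h1
  have h2 := RatFunc.algebraMap_injective ℚ h1
  simpa using congrArg Polynomial.natDegree h2

lemma wge_trans {n : ℕ} {a b c : Fin n → Fˣ} (h1 : wge n a b) (h2 : wge n b c) : wge n a c := by
  obtain ⟨f, f0, fn, hf⟩ := h1
  obtain ⟨g, g0, gn, hg⟩ := h2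
  refine ⟨fun i => f i + g i, by simp [f0, g0], by simp [fn, gn], fun i => ?_⟩
  rw [hf, hg, pow_add, pow_add, mul_inv]
  simp only [mul_comm, mul_left_comm, mul_assoc]

lemma wge_antisymm {n : ℕ} {a b : Fin n → Fˣ} (h1 : wge n a b) (h2 : wge n b a) : a = b := by
  obtain ⟨f, f0, fn, hf⟩ := h1
  obtain ⟨g, g0, gn, hg⟩ := h2
  have key : ∀ i, i ≤ n → f i + g i = 0 := by
    intro i
    induction i with
    | zero => simp [f0, g0]
    | succ i ih =>
      intro hi
      have h0 := ih (by omega)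
      have e1 := hf ⟨i, by omega⟩
      have e2 := hg ⟨i, by omega⟩
      have hfi : f i = 0 := by omega
      have hgi : g i = 0 := by omega
      simp only [hfi, hgi, pow_zero, inv_one, mul_one] at e1 e2
      rw [e2, ← mul_assoc, ← pow_add] at e1
      have e3 : vU ^ (f (i+1) + g (i+1)) = vU ^ 0 := by
        simpa using e1
      exact vU_pow_inj e3
  funext i
  have h0 := key i (by omega)
  have h1 := key (i + 1) (by omega)
  rw [hf i, show f (i+1) = 0 by omega, show f i = 0 by omega]
  simp

/-- shifted weight -/
def up {n : ℕ} (j : Fin (n - 1)) (ω : Fin n → Fˣ) : Fin n → Fˣ := fun i => vU ^ (pr i j) * ω i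
/-- shifted weight -/
def dn {n : ℕ} (j : Fin (n - 1)) (ω : Fin n → Fˣ) : Fin n → Fˣ := fun i => vU ^ (-pr i j) * ω i

lemma wge_up {n : ℕ} (j : Fin (n - 1)) (ω : Fin n → Fˣ) : wge n (up j ω) ω := by
  refine ⟨fun k => if k = (j : ℕ) + 1 then 1 else 0, by simp, ?_, fun i => ?_⟩
  · have := j.2
    simp only [ite_eq_right_iff]
    omega
  · simp only [up, pr]
    congr 1
    by_cases h1 : (i : ℕ) = j
    · simp [h1]
    · by_cases h2 : (i : ℕ) = (j : ℕ) + 1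
      · simp [h2]
      · simp [h1, h2]

lemma up_dn {n : ℕ} (j : Fin (n - 1)) (ω : Fin n → Fˣ) : up j (dn j ω) = ω := by
  funext i
  simp [up, dn]

lemma up_ne {n : ℕ} (j : Fin (n - 1)) (ω : Fin n → Fˣ) : up j ω ≠ ω := by
  intro h
  have := congrFun h (finL j)
  have e : vU ^ 1 = vU ^ 0 := by simpa [up, pr, finL] using this
  exact absurd (vU_pow_inj e) (by norm_num)

lemma wge_dn {n : ℕ} (j : Fin (n - 1)) (ω : Fin n → Fˣ) : wge n ω (dn j ω) := by
  have := wge_up j (dn j ω)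
  rwa [up_dn] at this

section

variable {n : ℕ} {M : Type} [AddCommGroup M] [Module F M]
  [Module (Uq n) M] [IsScalarTower F (Uq n) M]

lemma rel_smul {a b : FA n} (h : qRel n a b) (x : M) : mk n a • x = mk n b • x := by
  rw [rel h]

lemma K_E (i j) (x : M) : uK n i • uE n j • x = v ^ (pr i j) • uE n j • uK n i • x := by
  simpa [mkK, mkE, mul_smul] using rel_smul (qRel.KE i j) x
lemma K_Eb (i j) (x : M) : uK n i • uEb n j • x = v ^ (pr i j) • uEb n j • uK n i • x := by
  simpa [mkK, mkEb, mul_smul] using rel_smul (qRel.KEb i j) x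
lemma K_F (i j) (x : M) : uK n i • uF n j • x = v ^ (-pr i j) • uF n j • uK n i • x := by
  simpa [mkK, mkF, mul_smul] using rel_smul (qRel.KF i j) x
lemma K_Fb (i j) (x : M) : uK n i • uFb n j • x = v ^ (-pr i j) • uFb n j • uK n i • x := by
  simpa [mkK, mkFb, mul_smul] using rel_smul (qRel.KFb i j) x
lemma K_Kinv (i) (x : M) : uK n i • uKinv n i • x = x := by
  simpa [mkK, mkKinv, mul_smul] using rel_smul (qRel.KKinv i) x
lemma Kinv_K (i) (x : M) : uKinv n i • uK n i • x = x := by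
  simpa [mkK, mkKinv, mul_smul] using rel_smul (qRel.KinvK i) x
lemma K_Kb (i j) (x : M) : uK n i • uKb n j • x = uKb n j • uK n i • x := by
  simpa [mkK, mkKb, mul_smul] using rel_smul (qRel.KKb i j) x

lemma mem_ws {ω : Fin n → Fˣ} {x : M} :
    x ∈ weightSpace n M ω ↔ ∀ i : Fin n, uK n i • x = (ω i : F) • x := Iff.rfl

lemma E_mem {ω : Fin n → Fˣ} {x : M} (hx : x ∈ weightSpace n M ω) (j) :
    uE n j • x ∈ weightSpace n M (up j ω) := by
  intro i
  rw [K_E, hx i, uq_smul_f_smul, smul_smul]; simp [up, vU]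
lemma Eb_mem {ω : Fin n → Fˣ} {x : M} (hx : x ∈ weightSpace n M ω) (j) :
    uEb n j • x ∈ weightSpace n M (up j ω) := by
  intro i
  rw [K_Eb, hx i, uq_smul_f_smul, smul_smul]; simp [up, vU]
lemma F_mem {ω : Fin n → Fˣ} {x : M} (hx : x ∈ weightSpace n M ω) (j) :
    uF n j • x ∈ weightSpace n M (dn j ω) := by
  intro i
  rw [K_F, hx i, uq_smul_f_smul, smul_smul]; simp [dn, vU]
lemma Fb_mem {ω : Fin n → Fˣ} {x : M} (hx : x ∈ weightSpace n M ω) (j) :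
    uFb n j • x ∈ weightSpace n M (dn j ω) := by
  intro i
  rw [K_Fb, hx i, uq_smul_f_smul, smul_smul]; simp [dn, vU]
lemma Kb_mem {ω : Fin n → Fˣ} {x : M} (hx : x ∈ weightSpace n M ω) (j) :
    uKb n j • x ∈ weightSpace n M ω := by
  intro i
  rw [K_Kb, hx i, uq_smul_f_smul]
lemma Kinv_mem {ω : Fin n → Fˣ} {x : M} (hx : x ∈ weightSpace n M ω) (j) :
    uKinv n j • x ∈ weightSpace n M ω := by
  have h : uKinv n j • x = ((ω j : F)⁻¹) • x := by
    have h1 := Kinv_K j x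
    rw [hx j, uq_smul_f_smul] at h1
    conv_rhs => rw [← h1]
    rw [smul_smul, inv_mul_cancel₀ (Units.ne_zero _), one_smul]
  rw [h]
  exact Submodule.smul_mem _ _ hx

/-- multiplication by an algebra element, as a linear map -/
def opL (u : Uq n) : M →ₗ[F] M where
  toFun x := u • x
  map_add' := smul_add u
  map_smul' c x := uq_smul_f_smul n M u c x

/-- stability under a generator family -/
def FStable (S : Submodule F M) : Prop :=
  ∀ j, ∀ x ∈ S, uF n j • x ∈ S ∧ uFb n j • x ∈ S

/-- the span of lowering words applied to W -/
def lowSpan (W : Submodule F M) : Submodule F M :=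
  sInf {S : Submodule F M | W ≤ S ∧ FStable (n := n) S}

lemma le_lowSpan (W : Submodule F M) : W ≤ lowSpan (n := n) W :=
  le_sInf fun _ hS => hS.1

lemma lowSpan_le {W S : Submodule F M} (h1 : W ≤ S) (h2 : FStable (n := n) S) :
    lowSpan (n := n) W ≤ S := sInf_le ⟨h1, h2⟩

lemma lowSpan_stable (W : Submodule F M) : FStable (n := n) (lowSpan (n := n) W) := by
  intro j x hx
  simp only [lowSpan, Submodule.mem_sInf] at hx ⊢
  exact ⟨fun S hS => (hS.2 j x (hx S hS)).1, fun S hS => (hS.2 j x (hx S hS)).2⟩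

lemma lowSpan_induct (W : Submodule F M) (T : Set (Uq n))
    (hW : ∀ u ∈ T, ∀ x ∈ W, u • x ∈ lowSpan (n := n) W)
    (hT : ∀ x ∈ lowSpan (n := n) W, (∀ u ∈ T, u • x ∈ lowSpan (n := n) W) →
      ∀ u ∈ T, ∀ j, u • uF n j • x ∈ lowSpan (n := n) W ∧ u • uFb n j • x ∈ lowSpan (n := n) W) :
    ∀ x ∈ lowSpan (n := n) W, ∀ u ∈ T, u • x ∈ lowSpan (n := n) W := by
  have hm : ∀ x : M, x ∈ (lowSpan (n := n) W ⊓ ⨅ u ∈ T, (lowSpan (n := n) W).comap (opL u)) ↔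
      x ∈ lowSpan (n := n) W ∧ ∀ u ∈ T, u • x ∈ lowSpan (n := n) W := by
    intro x
    simp [Submodule.mem_iInf, opL]
  have : lowSpan (n := n) W ≤
      (lowSpan (n := n) W ⊓ ⨅ u ∈ T, (lowSpan (n := n) W).comap (opL u)) := by
    apply lowSpan_le
    · intro x hx
      exact (hm x).2 ⟨le_lowSpan W hx, fun u hu => hW u hu x hx⟩
    · intro j x hx
      obtain ⟨h1, h2⟩ := (hm x).1 hx
      exact ⟨(hm _).2 ⟨(lowSpan_stable W j x h1).1, fun u hu => (hT x h1 h2 u hu j).1⟩,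
        (hm _).2 ⟨(lowSpan_stable W j x h1).2, fun u hu => (hT x h1 h2 u hu j).2⟩⟩
  intro x hx
  exact ((hm x).1 (this hx)).2

lemma Kinv_F (i j) (x : M) : uKinv n i • uF n j • x = v ^ (pr i j) • uF n j • uKinv n i • x := by
  have h := K_F i j (uKinv n i • x)
  rw [K_Kinv] at h
  have h2 : uF n j • x = v ^ (pr i j) • uK n i • uF n j • uKinv n i • x := by
    rw [h, smul_smul, ← zpow_add₀ v_ne_zero]; simp
  rw [h2, uq_smul_f_smul, Kinv_K]
lemma Kinv_Fb (i j) (x : M) : uKinv n i • uFb n j • x = v ^ (pr i j) • uFb n j • uKinv n i • x := by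
  have h := K_Fb i j (uKinv n i • x)
  rw [K_Kinv] at h
  have h2 : uFb n j • x = v ^ (pr i j) • uK n i • uFb n j • uKinv n i • x := by
    rw [h, smul_smul, ← zpow_add₀ v_ne_zero]; simp
  rw [h2, uq_smul_f_smul, Kinv_K]

lemma Kb_F (S : Submodule F M) (hS : FStable (n := n) S) (x : M) (hx : x ∈ S)
    (hK : ∀ i, uK n i • x ∈ S) (hKb : ∀ i, uKb n i • x ∈ S) (i j) :
    uKb n i • uF n j • x ∈ S ∧ uKb n i • uFb n j • x ∈ S := by
  have hKF : ∀ i j, uK n i • uF n j • x ∈ S := fun i j => by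
    rw [K_F]; exact S.smul_mem _ (hS _ _ (hK _)).1
  have hKFb : ∀ i j, uK n i • uFb n j • x ∈ S := fun i j => by
    rw [K_Fb]; exact S.smul_mem _ (hS _ _ (hK _)).2
  by_cases h1 : (i : ℕ) = j
  · obtain rfl : i = finL j := Fin.ext h1
    have e1 := rel_smul (qRel.KbF j) x
    have e2 := rel_smul (qRel.KbFb j) x
    simp only [map_mul, map_sub, map_add, map_neg, map_smul, mkK, mkKb, mkF, mkFb, mul_smul,
      sub_smul, add_smul, neg_smul, smul_assoc] at e1 e2
    rw [sub_eq_iff_eq_add] at e1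
    rw [← eq_sub_iff_add_eq] at e2
    rw [e1, e2]
    exact ⟨S.add_mem (S.neg_mem (hS _ _ (hK _)).2) (S.smul_mem _ (hS _ _ (hKb _)).1),
      S.sub_mem (hS _ _ (hK _)).1 (S.smul_mem _ (hS _ _ (hKb _)).2)⟩
  by_cases h2 : (i : ℕ) = (j : ℕ) + 1
  · obtain rfl : i = finR j := Fin.ext h2
    have e1 := rel_smul (qRel.KbF' j) x
    have e2 := rel_smul (qRel.KbFb' j) x
    simp only [map_mul, map_sub, map_add, map_neg, map_smul, mkK, mkKb, mkF, mkFb, mul_smul,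
      sub_smul, add_smul, neg_smul, smul_assoc] at e1 e2
    rw [sub_eq_iff_eq_add] at e1
    rw [← eq_sub_iff_add_eq] at e2
    rw [← S.smul_mem_iff v_ne_zero, e1, ← S.smul_mem_iff v_ne_zero (x := uKb n (finR j) • uFb n j • x), e2]
    exact ⟨S.add_mem (hKFb _ _) (hS _ _ (hKb _)).1, S.sub_mem (hKF _ _) (hS _ _ (hKb _)).2⟩
  have e1 := rel_smul (qRel.KbFcomm i j h1 h2) x
  have e2 := rel_smul (qRel.KbFbcomm i j h1 h2) x
  simp only [map_mul, map_sub, map_add, map_zero, mkK, mkKb, mkF, mkFb, mul_smul,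
    sub_smul, add_smul, zero_smul] at e1 e2
  rw [sub_eq_zero] at e1
  rw [← eq_sub_iff_add_eq, zero_sub] at e2
  rw [e1, e2]
  exact ⟨(hS _ _ (hKb _)).1, S.neg_mem (hS _ _ (hKb _)).2⟩

lemma lowSpan_K (W : Submodule F M) (hW : ∀ i, ∀ x ∈ W, uK n i • x ∈ W ∧ uKinv n i • x ∈ W ∧
    uKb n i • x ∈ W) : ∀ x ∈ lowSpan (n := n) W, ∀ i, uK n i • x ∈ lowSpan (n := n) W ∧
      uKinv n i • x ∈ lowSpan (n := n) W ∧ uKb n i • x ∈ lowSpan (n := n) W := by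
  have st := lowSpan_stable (n := n) W
  have key := lowSpan_induct (n := n) W {u | ∃ i, u = uK n i ∨ u = uKinv n i ∨ u = uKb n i} ?_ ?_
  · intro x hx i
    exact ⟨key x hx _ ⟨i, by simp⟩, key x hx _ ⟨i, by simp⟩, key x hx _ ⟨i, by simp⟩⟩
  · rintro u ⟨i, rfl | rfl | rfl⟩ x hx
    · exact le_lowSpan W (hW i x hx).1
    · exact le_lowSpan W (hW i x hx).2.1
    · exact le_lowSpan W (hW i x hx).2.2
  · intro x hx h u hu j
    obtain ⟨i, rfl | rfl | rfl⟩ := hu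
    · have := h _ ⟨i, Or.inl rfl⟩
      rw [K_F, K_Fb]
      exact ⟨Submodule.smul_mem _ _ (st _ _ this).1, Submodule.smul_mem _ _ (st _ _ this).2⟩
    · have := h _ ⟨i, Or.inr (Or.inl rfl)⟩
      rw [Kinv_F, Kinv_Fb]
      exact ⟨Submodule.smul_mem _ _ (st _ _ this).1, Submodule.smul_mem _ _ (st _ _ this).2⟩
    · exact Kb_F _ st x hx (fun i => h _ ⟨i, by simp⟩) (fun i => h _ ⟨i, by simp⟩) i j

lemma lowSpan_E (W : Submodule F M) (hW : ∀ i, ∀ x ∈ W, uK n i • x ∈ W ∧ uKinv n i • x ∈ W ∧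
    uKb n i • x ∈ W) (hE : ∀ i, ∀ x ∈ W, uE n i • x = 0 ∧ uEb n i • x = 0) :
    ∀ x ∈ lowSpan (n := n) W, ∀ i, uE n i • x ∈ lowSpan (n := n) W ∧
      uEb n i • x ∈ lowSpan (n := n) W := by
  have st := lowSpan_stable (n := n) W
  have hK := lowSpan_K W hW
  have key := lowSpan_induct (n := n) W {u | ∃ i, u = uE n i ∨ u = uEb n i} ?_ ?_
  · intro x hx i
    exact ⟨key x hx _ ⟨i, by simp⟩, key x hx _ ⟨i, by simp⟩⟩
  · rintro u ⟨i, rfl | rfl⟩ x hx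
    · rw [(hE i x hx).1]; exact zero_mem _
    · rw [(hE i x hx).2]; exact zero_mem _
  · intro x hx h u hu j
    set S := lowSpan (n := n) W with hS
    have k1 : ∀ i, ∀ y ∈ S, uK n i • y ∈ S := fun i y hy => (hK y hy i).1
    have k2 : ∀ i, ∀ y ∈ S, uKinv n i • y ∈ S := fun i y hy => (hK y hy i).2.1
    have k3 : ∀ i, ∀ y ∈ S, uKb n i • y ∈ S := fun i y hy => (hK y hy i).2.2
    obtain ⟨i, rfl | rfl⟩ := hu
    · have hi := h _ ⟨i, Or.inl rfl⟩
      have e1 := rel_smul (qRel.EF i j) x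
      have e2 := rel_smul (qRel.EFb i j) x
      simp only [map_mul, map_sub, map_add, map_neg, map_smul, mkK, mkKinv, mkKb, mkF, mkFb, mkE,
        mkEb, mul_smul, sub_smul, add_smul, neg_smul, smul_assoc] at e1 e2
      rw [sub_eq_iff_eq_add] at e1 e2
      rw [e1, e2]
      refine ⟨S.add_mem ?_ (st _ _ hi).1, S.add_mem ?_ (st _ _ hi).2⟩
      · exact S.smul_mem _ (S.smul_mem _ (S.sub_mem (k1 _ _ (k2 _ _ hx)) (k2 _ _ (k1 _ _ hx))))
      · exact S.smul_mem _ (S.sub_mem (k2 _ _ (k3 _ _ hx)) (k3 _ _ (k2 _ _ hx)))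
    · have hi := h _ ⟨i, Or.inr rfl⟩
      have e1 := rel_smul (qRel.EbF i j) x
      have e2 := rel_smul (qRel.EbFb i j) x
      simp only [map_mul, map_sub, map_add, map_neg, map_smul, mkK, mkKinv, mkKb, mkF, mkFb, mkE,
        mkEb, mul_smul, sub_smul, add_smul, neg_smul, smul_assoc] at e1 e2
      rw [sub_eq_iff_eq_add] at e1
      rw [← eq_sub_iff_add_eq] at e2
      rw [e1, e2]
      refine ⟨S.add_mem ?_ (st _ _ hi).1, S.sub_mem ?_ (st _ _ hi).2⟩
      · exact S.smul_mem _ (S.sub_mem (k1 _ _ (k3 _ _ hx)) (k3 _ _ (k1 _ _ hx)))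
      · exact S.smul_mem _ (S.add_mem (S.smul_mem _ (S.sub_mem (k1 _ _ (k1 _ _ hx))
          (k2 _ _ (k2 _ _ hx)))) (S.sub_mem (S.smul_mem _ (k3 _ _ (k3 _ _ hx)))
          (S.smul_mem _ (k3 _ _ (k3 _ _ hx)))))

lemma stable_all (S : Submodule F M) (hg : ∀ g : QGen n, ∀ x ∈ S, mk n (FreeAlgebra.ι F g) • x ∈ S)
    (u : Uq n) : ∀ x ∈ S, u • x ∈ S := by
  obtain ⟨a, rfl⟩ : ∃ a, mk n a = u := RingQuot.mkAlgHom_surjective F (qRel n) u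
  induction a using FreeAlgebra.induction with
  | grade0 r =>
    intro x hx
    rw [AlgHom.commutes, algebraMap_smul]
    exact S.smul_mem _ hx
  | grade1 g => exact hg g
  | mul a b ha hb =>
    intro x hx
    rw [map_mul, mul_smul]
    exact ha _ (hb _ hx)
  | add a b ha hb =>
    intro x hx
    rw [map_add, add_smul]
    exact S.add_mem (ha _ hx) (hb _ hx)

end

/-- Proposition 3.3: a nonzero finite-dimensional simple weight
`U_v`-module has exactly one maximal weight `ω`, is a highest weight module of
highest weight `ω`, and `E_j, Ē_j` annihilate `M_ω`. -/
theorem simple_fd_weight_module_is_hw (n : ℕ) (hn : 2 ≤ n)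
    (M : Type) [AddCommGroup M] [Module F M] [Module (Uq n) M] [IsScalarTower F (Uq n) M]
    [Nontrivial M] [FiniteDimensional F M]
    (hsimple : ∀ N : Submodule (Uq n) M, N = ⊥ ∨ N = ⊤)
    (hweight : IsWeightModule n M) :
    ∃ ω : Fin n → Fˣ, IsMaximalWeight n M ω ∧
      (∀ γ : Fin n → Fˣ, IsMaximalWeight n M γ → γ = ω) ∧
      (∀ j : Fin (n - 1), ∀ x ∈ weightSpace n M ω, uE n j • x = 0 ∧ uEb n j • x = 0) ∧
      (∃ m : M, m ∈ weightSpace n M ω ∧ IsHWVector n M ω m ∧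
        Submodule.span (Uq n) {m} = ⊤) := by
  obtain ⟨hind, htop⟩ := hweight
  have hsne : ∃ γ, IsWeight n M γ := by
    by_contra hcon
    push Not at hcon
    have : IsEmpty {ω : Fin n → Fˣ // IsWeight n M ω} := ⟨fun a => hcon a.1 a.2⟩
    rw [iSup_of_empty] at htop
    exact bot_ne_top htop
  have hfin : Finite {ω : Fin n → Fˣ // IsWeight n M ω} :=
    WellFoundedGT.finite_of_iSupIndep hind (fun a => a.2)
  let r : {ω : Fin n → Fˣ // IsWeight n M ω} → {ω : Fin n → Fˣ // IsWeight n M ω} → Prop :=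
    fun a b => wgt n a.1 b.1
  have hir : Std.Irrefl r := ⟨fun a h => h.2 rfl⟩
  have htr : IsTrans _ r := ⟨fun a b c h1 h2 => ⟨wge_trans h1.1 h2.1, fun h => by
    have h3 := h2.1
    rw [← h] at h3
    exact h1.2 (wge_antisymm h1.1 h3)⟩⟩
  have hwf : WellFounded r := Finite.wellFounded_of_trans_of_irrefl r
  obtain ⟨γ0, hγ0⟩ := hsne
  obtain ⟨⟨ω, hω⟩, -, hmax⟩ := hwf.has_min Set.univ ⟨⟨γ0, hγ0⟩, trivial⟩
  have hmaxω : IsMaximalWeight n M ω := ⟨hω, fun γ hγ => hmax ⟨γ, hγ⟩ trivial⟩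
  have hup : ∀ j, weightSpace n M (up j ω) = ⊥ := by
    intro j
    by_contra h
    exact hmaxω.2 _ h ⟨wge_up j ω, up_ne j ω⟩
  have hE : ∀ j : Fin (n - 1), ∀ x ∈ weightSpace n M ω, uE n j • x = 0 ∧ uEb n j • x = 0 := by
    intro j x hx
    have h1 := E_mem hx j
    have h2 := Eb_mem hx j
    rw [hup j, Submodule.mem_bot] at h1 h2
    exact ⟨h1, h2⟩
  have hW : ∀ i, ∀ x ∈ weightSpace n M ω, uK n i • x ∈ weightSpace n M ω ∧
      uKinv n i • x ∈ weightSpace n M ω ∧ uKb n i • x ∈ weightSpace n M ω := by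
    intro i x hx
    refine ⟨?_, Kinv_mem hx i, Kb_mem hx i⟩
    rw [hx i]
    exact Submodule.smul_mem _ _ hx
  obtain ⟨m, hm, hm0⟩ := Submodule.exists_mem_ne_zero_of_ne_bot hω
  have hst : ∀ u : Uq n, ∀ x ∈ lowSpan (n := n) (weightSpace n M ω),
      u • x ∈ lowSpan (n := n) (weightSpace n M ω) := by
    intro u
    apply stable_all
    intro g x hx
    cases g with
    | K i => exact (lowSpan_K _ hW x hx i).1
    | Kinv i => exact (lowSpan_K _ hW x hx i).2.1
    | Kb i => exact (lowSpan_K _ hW x hx i).2.2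
    | E i => exact (lowSpan_E _ hW hE x hx i).1
    | Eb i => exact (lowSpan_E _ hW hE x hx i).2
    | Fg i => exact (lowSpan_stable _ i x hx).1
    | Fb i => exact (lowSpan_stable _ i x hx).2
  have hgen : Submodule.span (Uq n) {m} = ⊤ := by
    rcases hsimple (Submodule.span (Uq n) {m}) with h | h
    · exact absurd (Submodule.span_singleton_eq_bot.1 h) hm0
    · exact h
  have hlow : lowSpan (n := n) (weightSpace n M ω) = ⊤ := by
    rw [eq_top_iff]
    intro x _
    have hx : x ∈ Submodule.span (Uq n) {m} := by rw [hgen]; trivial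
    obtain ⟨u, rfl⟩ := Submodule.mem_span_singleton.1 hx
    exact hst u m (le_lowSpan _ hm)
  let P : Submodule F M := ⨆ γ : {γ : Fin n → Fˣ // wge n ω γ}, weightSpace n M γ.1
  have hPmem : ∀ γ, wge n ω γ → weightSpace n M γ ≤ P := fun γ h =>
    le_iSup (fun γ : {γ : Fin n → Fˣ // wge n ω γ} => weightSpace n M γ.1) ⟨γ, h⟩
  have hrefl : wge n ω ω := ⟨fun _ => 0, rfl, rfl, fun i => by simp⟩
  have hP : P = ⊤ := by
    rw [eq_top_iff, ← hlow]
    apply lowSpan_le (hPmem ω hrefl)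
    intro j x hx
    have h1 : P ≤ P.comap (opL (uF n j)) := iSup_le fun γ y hy =>
      hPmem _ (wge_trans γ.2 (wge_dn j γ.1)) (F_mem hy j)
    have h2 : P ≤ P.comap (opL (uFb n j)) := iSup_le fun γ y hy =>
      hPmem _ (wge_trans γ.2 (wge_dn j γ.1)) (Fb_mem hy j)
    exact ⟨h1 hx, h2 hx⟩
  have hall : ∀ γ, IsWeight n M γ → wge n ω γ := by
    intro γ hγ
    by_contra hn'
    have hd := hind ⟨γ, hγ⟩
    have hle : P ≤ ⨆ (j : {ω : Fin n → Fˣ // IsWeight n M ω}) (_ : j ≠ ⟨γ, hγ⟩),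
        weightSpace n M j.1 := by
      refine iSup_le fun δ => ?_
      by_cases hδ : IsWeight n M δ.1
      · refine le_iSup₂_of_le (⟨δ.1, hδ⟩ : {ω : Fin n → Fˣ // IsWeight n M ω}) ?_ le_rfl
        intro h
        apply hn'
        have h' : δ.1 = γ := congrArg Subtype.val h
        rw [← h']
        exact δ.2
      · rw [show weightSpace n M δ.1 = ⊥ from not_not.1 hδ]
        exact bot_le
    rw [hP, top_le_iff] at hle
    rw [hle, disjoint_top] at hd
    exact hγ hd
  refine ⟨ω, hmaxω, ?_, hE, m, hm, ⟨hm0, hm, fun j => hE j m hm⟩, hgen⟩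
  intro γ hγ
  by_contra hne
  exact hγ.2 ω hω ⟨hall γ hγ.1, fun h => hne h.symm⟩

end QueerPaper
end
end

section
/- Let M be a nonzero finite-dimensional simple U_v-module which is a weight module, let 1 ≤ j ≤ n−1, and let X be any of the elements E_j, F_j, Ē_j, F̄_j of U_v. If m ∈ M is nonzero and t ∈ F satisfies X·m = t·m, then t = 0; i.e. the action of X on M has no eigenvector with nonzero eigenvalue. (Proposition 3.4 of the paper.) -/
open scoped BigOperators

noncomputable section

namespace QueerPaper

lemma v_pow_inj : Function.Injective (fun r : ℕ => v ^ r) := by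
  intro a b hab
  have h1 : algebraMap (Polynomial ℚ) (RatFunc ℚ) (Polynomial.X ^ a)
      = algebraMap (Polynomial ℚ) (RatFunc ℚ) (Polynomial.X ^ b) := by
    simpa [v, map_pow, RatFunc.algebraMap_X] using hab
  have h2 := RatFunc.algebraMap_injective ℚ h1
  have h3 := congrArg Polynomial.natDegree h2
  simpa using h3

/-- If `K X = c X K` with `K` injective on `M` and `c` not a root of unity, then `X` has no
nonzero eigenvalue on `M`. -/
lemma no_eig (n : ℕ) (M : Type) [AddCommGroup M] [Module F M] [Module (Uq n) M]
    [IsScalarTower F (Uq n) M] [FiniteDimensional F M] (K K' X : Uq n) (hK : K' * K = 1) (c : F)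
    (hc0 : c ≠ 0) (hc : Function.Injective (fun r : ℕ => c ^ r))
    (hKX : X * K = c • (K * X)) (m : M) (hm : m ≠ 0) (t : F) (h : X • m = t • m) : t = 0 := by
  by_contra ht
  have hKinj : ∀ x : M, x ≠ 0 → K • x ≠ 0 := by
    intro x hx h0
    apply hx
    rw [← one_smul (Uq n) x, ← hK, mul_smul, h0, smul_zero]
  have key : ∀ r : ℕ, ∃ x : M, x ≠ 0 ∧ X • x = (c ^ r * t) • x := by
    intro r
    induction r with
    | zero => exact ⟨m, hm, by simpa using h⟩
    | succ r ih =>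
      obtain ⟨x, hx, hx2⟩ := ih
      refine ⟨K • x, hKinj x hx, ?_⟩
      rw [← mul_smul, hKX, smul_assoc, mul_smul, hx2, uq_smul_f_smul, ← mul_smul, pow_succ]
      congr 1
      ring
  let f : Module.End F M :=
    { toFun := fun x => X • x
      map_add' := fun a b => smul_add X a b
      map_smul' := fun a b => uq_smul_f_smul n M X a b }
  have hfin := Module.End.finite_hasEigenvalue f
  have hinj : Function.Injective (fun r : ℕ => c ^ r * t) := by
    intro a b hab
    exact hc (mul_right_cancel₀ ht hab)
  refine Set.infinite_of_injective_forall_mem hinj (fun r => ?_) hfin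
  obtain ⟨x, hx, hx2⟩ := key r
  exact Module.End.hasEigenvalue_of_hasEigenvector
    (x := x) ⟨Module.End.mem_eigenspace_iff.2 hx2, hx⟩

lemma pr_finL {n : ℕ} (j : Fin (n - 1)) : pr (finL j) j = 1 := by
  simp [pr, finL]

/-- Proposition 3.4: on a nonzero finite-dimensional simple weight
`U_v`-module, none of `E_j, F_j, Ē_j, F̄_j` has an eigenvector with nonzero
eigenvalue. -/
theorem no_nonzero_eigenvalue (n : ℕ) (hn : 2 ≤ n)
    (M : Type) [AddCommGroup M] [Module F M] [Module (Uq n) M] [IsScalarTower F (Uq n) M]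
    [Nontrivial M] [FiniteDimensional F M]
    (hsimple : ∀ N : Submodule (Uq n) M, N = ⊥ ∨ N = ⊤)
    (hweight : IsWeightModule n M)
    (j : Fin (n - 1)) (X : Uq n)
    (hX : X = uE n j ∨ X = uF n j ∨ X = uEb n j ∨ X = uFb n j)
    (m : M) (hm : m ≠ 0) (t : F) (h : X • m = t • m) :
    t = 0 := by
  have hv := v_ne_zero
  have hinv : Function.Injective (fun r : ℕ => v⁻¹ ^ r) := by
    intro a b hab
    apply v_pow_inj
    simpa using hab
  have hK : uKinv n (finL j) * uK n (finL j) = 1 := by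
    have := RingQuot.mkAlgHom_rel F (qRel.KinvK (n := n) (finL j))
    rw [map_mul, map_one] at this
    exact this
  rcases hX with rfl | rfl | rfl | rfl
  · refine no_eig n M _ _ _ hK v⁻¹ (inv_ne_zero hv) hinv ?_ m hm t h
    have := RingQuot.mkAlgHom_rel F (qRel.KE (n := n) (finL j) j)
    rw [map_mul, map_smul, map_mul, pr_finL, zpow_one] at this
    exact (eq_inv_smul_iff₀ hv).2 this.symm
  · refine no_eig n M _ _ _ hK v hv v_pow_inj ?_ m hm t h
    have := RingQuot.mkAlgHom_rel F (qRel.KF (n := n) (finL j) j)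
    rw [map_mul, map_smul, map_mul, pr_finL, zpow_neg, zpow_one] at this
    exact (inv_smul_eq_iff₀ hv).1 this.symm
  · refine no_eig n M _ _ _ hK v⁻¹ (inv_ne_zero hv) hinv ?_ m hm t h
    have := RingQuot.mkAlgHom_rel F (qRel.KEb (n := n) (finL j) j)
    rw [map_mul, map_smul, map_mul, pr_finL, zpow_one] at this
    exact (eq_inv_smul_iff₀ hv).2 this.symm
  · refine no_eig n M _ _ _ hK v hv v_pow_inj ?_ m hm t h
    have := RingQuot.mkAlgHom_rel F (qRel.KFb (n := n) (finL j) j)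
    rw [map_mul, map_smul, map_mul, pr_finL, zpow_neg, zpow_one] at this
    exact (inv_smul_eq_iff₀ hv).1 this.symm

end QueerPaper
end
end

section
/- Let M be a U_v-module, let 1 ≤ i ≤ n−2, and let m ∈ M satisfy F_{i+1}·m = 0. Then for every integer k ≥ 1 there exists a scalar t_k ∈ F such that F_i·F_{i+1}·F_i^k·m = t_k·F_{i+1}·F_i^{k+1}·m. (Proposition 4.7 of the paper; there it is stated for a weight vector m of weight λ with λ_{i+1} = 0 in the twisted queer q-Schur superalgebra, in which case F_{i+1}·m = 0 holds, and the proof uses only this relation together with the quantum Serre relations (QQ6).) -/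
open scoped BigOperators

noncomputable section

namespace QueerPaper

lemma v_pow_ne_one (m : ℕ) (hm : 0 < m) : v ^ m ≠ 1 := by
  intro h
  have h2 : algebraMap (Polynomial ℚ) F (Polynomial.X ^ m) = algebraMap (Polynomial ℚ) F 1 := by
    rw [map_pow, RatFunc.algebraMap_X, map_one]; exact h
  have h3 := RatFunc.algebraMap_injective ℚ h2
  have h4 := congrArg Polynomial.natDegree h3
  simp at h4
  omega

lemma s_ne (k : ℕ) : v ^ (k + 1) - v⁻¹ ^ (k + 1) ≠ 0 := by
  intro h
  have hv : v ^ (k + 1) ≠ 0 := pow_ne_zero _ v_ne_zero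
  have h1 : v ^ (k + 1) = (v ^ (k + 1))⁻¹ := by rw [← inv_pow]; exact sub_eq_zero.mp h
  have h2 : v ^ (k + 1) * v ^ (k + 1) = 1 := by
    nth_rewrite 2 [h1]; exact mul_inv_cancel₀ hv
  rw [← pow_add] at h2
  exact v_pow_ne_one _ (by omega) h2

lemma s_rec (k : ℕ) : v ^ (k + 2) - v⁻¹ ^ (k + 2) =
    (v + v⁻¹) * (v ^ (k + 1) - v⁻¹ ^ (k + 1)) - (v ^ k - v⁻¹ ^ k) := by
  have h : v * v⁻¹ = 1 := mul_inv_cancel₀ v_ne_zero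
  linear_combination (v ^ k - v⁻¹ ^ k) * (-h)

lemma lin {K M : Type} [Field K] [AddCommGroup M] [Module K M] (p q c d : K) (x y z : M)
    (h1 : p • x = q • y) (h2 : x - (c • y + d • y) + z = 0) :
    ((c + d) * p - q) • y = p • z := by
  have h3 : z = (c + d) • y - x := by
    rw [add_smul, ← sub_eq_zero, ← h2]; abel
  rw [h3, smul_sub, h1, smul_smul, sub_smul, mul_comm p]

lemma key (n : ℕ) (M : Type) [AddCommGroup M] [Module F M] [Module (Uq n) M]
    [IsScalarTower F (Uq n) M] (a b : Uq n)
    (hs : a ^ 2 * b - (v + v⁻¹) • (a * b * a) + b * a ^ 2 = 0) (m : M) (hm : b • m = 0)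
    (k : ℕ) : (v ^ (k + 1) - v⁻¹ ^ (k + 1)) • (a • (b • (a ^ k • m)))
      = (v ^ k - v⁻¹ ^ k) • (b • (a ^ (k + 1) • m)) := by
  induction k with
  | zero => simp [hm]
  | succ k ih =>
    have h1 := congrArg (fun x => a • x) ih
    simp only [uq_smul_f_smul] at h1
    have h2 := congrArg (fun u : Uq n => u • (a ^ k • m)) hs
    simp only [add_smul, sub_smul, zero_smul, smul_assoc, mul_smul, pow_two] at h2
    have e1 : a ^ (k + 1) • m = a • (a ^ k • m) := by rw [pow_succ', mul_smul]
    have e2 : a ^ (k + 1 + 1) • m = a • a • (a ^ k • m) := by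
      rw [pow_succ', mul_smul, e1]
    rw [e1] at h1
    rw [e1, e2, s_rec]
    generalize a • a • b • a ^ k • m = x at *
    generalize a • b • a • a ^ k • m = y at *
    generalize b • a • a • a ^ k • m = z at *
    exact lin _ _ _ _ x y z h1 h2

/-- Proposition 4.7: if `F_{i+1}·m = 0` then for every `k ≥ 1` there
is a scalar `t_k` with `F_i F_{i+1} F_i^k m = t_k F_{i+1} F_i^{k+1} m`. -/
theorem f_order (n : ℕ) (hn : 2 ≤ n)
    (M : Type) [AddCommGroup M] [Module F M] [Module (Uq n) M] [IsScalarTower F (Uq n) M]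
    (j : Fin (n - 1)) (h : (j : ℕ) + 1 < n - 1) (m : M)
    (hm : uF n ⟨(j : ℕ) + 1, h⟩ • m = 0) (k : ℕ) (hk : 1 ≤ k) :
    ∃ t : F,
      uF n j • (uF n ⟨(j : ℕ) + 1, h⟩ • ((uF n j ^ k) • m))
        = t • (uF n ⟨(j : ℕ) + 1, h⟩ • ((uF n j ^ (k + 1)) • m)) := by
  have hs : uF n j ^ 2 * uF n ⟨(j : ℕ) + 1, h⟩
      - (v + v⁻¹) • (uF n j * uF n ⟨(j : ℕ) + 1, h⟩ * uF n j)
      + uF n ⟨(j : ℕ) + 1, h⟩ * uF n j ^ 2 = 0 := by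
    have := RingQuot.mkAlgHom_rel F (qRel.serreF j ⟨(j : ℕ) + 1, h⟩ (Or.inr rfl))
    simp only [map_add, map_sub, map_mul, map_pow, map_smul, map_zero] at this
    exact this
  have hk := key n M _ _ hs m hm k
  refine ⟨(v ^ (k + 1) - v⁻¹ ^ (k + 1))⁻¹ * (v ^ k - v⁻¹ ^ k), ?_⟩
  rw [mul_smul, ← hk, inv_smul_smul₀ (s_ne k)]

end QueerPaper
end
end

section
/- Let M be a U_v-module, let 1 ≤ i ≤ n−2, and let m ∈ M satisfy F_{i+1}·m = 0. Then for all integers p, k ≥ 1 with p ≤ k there exists a scalar t_{p,k} ∈ F such that F_i·F_{i+1}^p·F_i^k·m = t_{p,k}·F_{i+1}^p·F_i^{k+1}·m. (Proposition 4.8 of the paper; there it is stated for a weight vector m of weight λ with λ_{i+1} = 0 and λ_i ≥ k in the twisted queer q-Schur superalgebra, in which case F_{i+1}·m = 0 holds, and the proof uses only this relation together with the quantum Serre relations (QQ6).) -/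
open scoped BigOperators

noncomputable section

namespace QueerPaper

section Helpers

variable {M : Type} [AddCommGroup M] [Module F M]

/-- quantum integers -/
noncomputable def qs : ℕ → F
  | 0 => 0
  | 1 => 1
  | (k + 2) => (v + v⁻¹) * qs (k + 1) - qs k

lemma v_pow_ne_one_s13 (k : ℕ) (hk : k ≠ 0) : v ^ k ≠ 1 := by
  intro h
  have h1 : algebraMap (Polynomial ℚ) F (Polynomial.X ^ k) = algebraMap (Polynomial ℚ) F 1 := by
    rw [map_pow, RatFunc.algebraMap_X, map_one]; exact h
  have h2 := RatFunc.algebraMap_injective ℚ h1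
  have h3 := congrArg Polynomial.natDegree h2
  simp at h3
  exact hk h3

lemma qs_formula (k : ℕ) :
    (v - v⁻¹) * qs k = v ^ k - (v⁻¹) ^ k ∧
      (v - v⁻¹) * qs (k + 1) = v ^ (k + 1) - (v⁻¹) ^ (k + 1) := by
  induction k with
  | zero => simp [qs]
  | succ k ih =>
    obtain ⟨h1, h2⟩ := ih
    refine ⟨h2, ?_⟩
    have hv : v * v⁻¹ = 1 := mul_inv_cancel₀ v_ne_zero
    have e : qs (k + 1 + 1) = (v + v⁻¹) * qs (k + 1) - qs k := rfl
    rw [e]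
    linear_combination (v + v⁻¹) * h2 - h1 + (v ^ k - v⁻¹ ^ k) * hv

lemma qs_ne_zero (k : ℕ) : qs (k + 1) ≠ 0 := by
  intro h
  have h1 := (qs_formula k).2
  rw [h, mul_zero] at h1
  have h2 : v ^ (k + 1) * v⁻¹ ^ (k + 1) = 1 := by
    rw [← mul_pow, mul_inv_cancel₀ v_ne_zero, one_pow]
  apply v_pow_ne_one_s13 ((k + 1) + (k + 1)) (by omega)
  rw [pow_add]
  linear_combination h2 - v ^ (k + 1) * h1

lemma aux1 {K N : Type} [Field K] [AddCommGroup N] [Module K N] (q s t : K) (x y z : N)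
    (h1 : s • x = t • y) (h2 : x - q • y + z = 0) : (q * s - t) • y = s • z := by
  linear_combination (norm := module) h1 - s • h2

lemma aux2 {K N : Type} [Field K] [AddCommGroup N] [Module K N] (q s t : K) (x y z w : N)
    (h1 : y = s • w) (h2 : z = t • w) (h3 : z - q • y + x = 0) : x = (q * s - t) • w := by
  linear_combination (norm := module) h3 + q • h1 - h2

lemma base_step (A B : M →ₗ[F] M)
    (hAB : ∀ x, A (A (B x)) - (v + v⁻¹) • A (B (A x)) + B (A (A x)) = 0)
    (m : M) (hm : B m = 0) (k : ℕ) :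
    qs (k + 1) • A (B ((A ^ k) m)) = qs k • B ((A ^ (k + 1)) m) := by
  induction k with
  | zero => simp [qs, hm]
  | succ k ih =>
    have h1 := congrArg A ih
    rw [map_smul, map_smul] at h1
    have h2 := hAB ((A ^ k) m)
    have e : qs (k + 1 + 1) = (v + v⁻¹) * qs (k + 1) - qs k := rfl
    simp only [pow_succ', Module.End.mul_apply] at h1 h2 ⊢
    rw [e]
    exact aux1 _ _ _ _ _ _ h1 h2

lemma main_step (A B : M →ₗ[F] M)
    (hAB : ∀ x, A (A (B x)) - (v + v⁻¹) • A (B (A x)) + B (A (A x)) = 0)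
    (hBA : ∀ x, B (B (A x)) - (v + v⁻¹) • B (A (B x)) + A (B (B x)) = 0)
    (m : M) (hm : B m = 0) (k p : ℕ) :
    (∃ t : F, A ((B ^ p) ((A ^ k) m)) = t • (B ^ p) ((A ^ (k + 1)) m)) ∧
    (∃ t : F, A ((B ^ (p + 1)) ((A ^ k) m)) = t • (B ^ (p + 1)) ((A ^ (k + 1)) m)) := by
  induction p with
  | zero =>
    refine ⟨⟨1, by simp [pow_succ']⟩, ⟨(qs (k + 1))⁻¹ * qs k, ?_⟩⟩
    have h := base_step A B hAB m hm k
    rw [zero_add, pow_one, mul_smul, ← h, smul_smul, inv_mul_cancel₀ (qs_ne_zero k), one_smul]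
  | succ p ih =>
    obtain ⟨⟨t, ht⟩, ⟨s, hs⟩⟩ := ih
    refine ⟨⟨s, hs⟩, ⟨(v + v⁻¹) * s - t, ?_⟩⟩
    have h1 := congrArg B hs
    have h2 := congrArg (fun x => B (B x)) ht
    have h3 := hBA ((B ^ p) ((A ^ k) m))
    simp only [map_smul] at h1 h2
    simp only [pow_succ' B, Module.End.mul_apply] at h1 h2 h3 ⊢
    exact aux2 _ _ _ _ _ _ _ h1 h2 h3

lemma uF_serre (n : ℕ) (i j : Fin (n - 1))
    (h : (i : ℕ) = (j : ℕ) + 1 ∨ (j : ℕ) = (i : ℕ) + 1) :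
    uF n i ^ 2 * uF n j - (v + v⁻¹) • (uF n i * uF n j * uF n i) + uF n j * uF n i ^ 2 = 0 := by
  have h1 := RingQuot.mkAlgHom_rel F (qRel.serreF i j h)
  change mk n _ = mk n _ at h1
  simp only [map_add, map_sub, map_mul, map_pow, map_smul, map_zero] at h1
  exact h1

/-- action of an algebra element as a linear map -/
noncomputable def act (n : ℕ) [Module (Uq n) M] [IsScalarTower F (Uq n) M] (u : Uq n) :
    M →ₗ[F] M where
  toFun x := u • x
  map_add' := smul_add u
  map_smul' c x := uq_smul_f_smul n M u c x

lemma act_pow (n : ℕ) [Module (Uq n) M] [IsScalarTower F (Uq n) M] (u : Uq n) (k : ℕ) (x : M) :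
    (act n u ^ k) x = u ^ k • x := by
  induction k with
  | zero => simp
  | succ k ih =>
    rw [pow_succ', pow_succ', Module.End.mul_apply, ih, mul_smul]; rfl

lemma act_serre (n : ℕ) [Module (Uq n) M] [IsScalarTower F (Uq n) M] (i j : Fin (n - 1))
    (h : (i : ℕ) = (j : ℕ) + 1 ∨ (j : ℕ) = (i : ℕ) + 1) (x : M) :
    act n (uF n i) (act n (uF n i) (act n (uF n j) x))
      - (v + v⁻¹) • act n (uF n i) (act n (uF n j) (act n (uF n i) x))
      + act n (uF n j) (act n (uF n i) (act n (uF n i) x)) = 0 := by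
  have h1 := congrArg (fun u : Uq n => u • x) (uF_serre n i j h)
  generalize v + v⁻¹ = q at h1 ⊢
  simp only [add_smul, sub_smul, smul_assoc, mul_smul, pow_two, zero_smul] at h1
  exact h1

end Helpers

/-- Proposition 4.8: if `F_{i+1}·m = 0` then for all `1 ≤ p ≤ k` there
is a scalar `t_{p,k}` with `F_i F_{i+1}^p F_i^k m = t_{p,k} F_{i+1}^p F_i^{k+1} m`. -/
theorem f_order' (n : ℕ) (hn : 2 ≤ n)
    (M : Type) [AddCommGroup M] [Module F M] [Module (Uq n) M] [IsScalarTower F (Uq n) M]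
    (j : Fin (n - 1)) (h : (j : ℕ) + 1 < n - 1) (m : M)
    (hm : uF n ⟨(j : ℕ) + 1, h⟩ • m = 0)
    (p k : ℕ) (hp : 1 ≤ p) (hk : 1 ≤ k) (hpk : p ≤ k) :
    ∃ t : F,
      uF n j • ((uF n ⟨(j : ℕ) + 1, h⟩ ^ p) • ((uF n j ^ k) • m))
        = t • ((uF n ⟨(j : ℕ) + 1, h⟩ ^ p) • ((uF n j ^ (k + 1)) • m)) := by
  obtain ⟨t, ht⟩ := (main_step (act n (uF n j)) (act n (uF n ⟨(j : ℕ) + 1, h⟩))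
    (act_serre (M := M) n j ⟨(j : ℕ) + 1, h⟩ (Or.inr rfl))
    (act_serre (M := M) n ⟨(j : ℕ) + 1, h⟩ j (Or.inl rfl)) m hm k p).1
  refine ⟨t, ?_⟩
  rw [act_pow, act_pow, act_pow, act_pow] at ht
  exact ht

end QueerPaper
end
end

section
/- There exists a (unique) F-algebra homomorphism π_n : U_v(sl_n) → U_v(q_n) satisfying π_n(K_j) = K_jK_{j+1}^{-1}, π_n(K_j^{-1}) = K_j^{-1}K_{j+1}, π_n(E_j) = E_j and π_n(F_j) = F_j for all 1 ≤ j ≤ n−1; i.e. the assignment of generators respects all defining relations of U_v(sl_n). (Section 3 of the paper.) -/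
open scoped BigOperators

noncomputable section

namespace QueerPaper

/-- Generators of the quantized enveloping algebra `U_v(sl_n)`:
`K_j, K_j⁻¹, E_j, F_j` for `1 ≤ j ≤ n−1` (indexed by `Fin (n-1)`, 0-based). -/
inductive SlGen (n : ℕ) : Type
  | K : Fin (n - 1) → SlGen n
  | Kinv : Fin (n - 1) → SlGen n
  | E : Fin (n - 1) → SlGen n
  | F : Fin (n - 1) → SlGen n

abbrev SlFA (n : ℕ) : Type := FreeAlgebra F (SlGen n)

namespace SlPre

variable (n : ℕ)

def K (j : Fin (n - 1)) : SlFA n := FreeAlgebra.ι F (SlGen.K j)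
def Kinv (j : Fin (n - 1)) : SlFA n := FreeAlgebra.ι F (SlGen.Kinv j)
def E (j : Fin (n - 1)) : SlFA n := FreeAlgebra.ι F (SlGen.E j)
def Fg (j : Fin (n - 1)) : SlFA n := FreeAlgebra.ι F (SlGen.F j)

end SlPre

/-- The Cartan matrix of `sl_n`. -/
def cart {n : ℕ} (i j : Fin (n - 1)) : ℤ :=
  if i = j then 2 else if (i : ℕ) = (j : ℕ) + 1 ∨ (j : ℕ) = (i : ℕ) + 1 then -1 else 0

open SlPre in
/-- The defining relations of `U_v(sl_n)`. -/
inductive slRel (n : ℕ) : SlFA n → SlFA n → Prop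
  | KK (i j : Fin (n - 1)) : slRel n (K n i * K n j) (K n j * K n i)
  | KKinv (i : Fin (n - 1)) : slRel n (K n i * Kinv n i) 1
  | KinvK (i : Fin (n - 1)) : slRel n (Kinv n i * K n i) 1
  | KE (i j : Fin (n - 1)) :
      slRel n (K n i * E n j) ((v ^ cart i j) • (E n j * K n i))
  | KF (i j : Fin (n - 1)) :
      slRel n (K n i * Fg n j) ((v ^ (-cart i j)) • (Fg n j * K n i))
  | EF (i j : Fin (n - 1)) :
      slRel n (E n i * Fg n j - Fg n j * E n i)
        ((dlt i j * (1 / (v - v⁻¹))) • (K n i - Kinv n i))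
  | EEcomm (i j : Fin (n - 1)) (h : (i : ℕ) > (j : ℕ) + 1 ∨ (j : ℕ) > (i : ℕ) + 1) :
      slRel n (E n i * E n j) (E n j * E n i)
  | FFcomm (i j : Fin (n - 1)) (h : (i : ℕ) > (j : ℕ) + 1 ∨ (j : ℕ) > (i : ℕ) + 1) :
      slRel n (Fg n i * Fg n j) (Fg n j * Fg n i)
  | serreE (i j : Fin (n - 1)) (h : (i : ℕ) = (j : ℕ) + 1 ∨ (j : ℕ) = (i : ℕ) + 1) :
      slRel n (E n i ^ 2 * E n j - (v + v⁻¹) • (E n i * E n j * E n i) + E n j * E n i ^ 2) 0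
  | serreF (i j : Fin (n - 1)) (h : (i : ℕ) = (j : ℕ) + 1 ∨ (j : ℕ) = (i : ℕ) + 1) :
      slRel n (Fg n i ^ 2 * Fg n j - (v + v⁻¹) • (Fg n i * Fg n j * Fg n i) + Fg n j * Fg n i ^ 2) 0

/-- The quantized enveloping algebra `U_v(sl_n)`. -/
abbrev Usl (n : ℕ) : Type := RingQuot (slRel n)

noncomputable def slmk (n : ℕ) : SlFA n →ₐ[F] Usl n := RingQuot.mkAlgHom F (slRel n)

noncomputable def sK (n : ℕ) (j : Fin (n - 1)) : Usl n := slmk n (SlPre.K n j)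
noncomputable def sKinv (n : ℕ) (j : Fin (n - 1)) : Usl n := slmk n (SlPre.Kinv n j)
noncomputable def sE (n : ℕ) (j : Fin (n - 1)) : Usl n := slmk n (SlPre.E n j)
noncomputable def sF (n : ℕ) (j : Fin (n - 1)) : Usl n := slmk n (SlPre.Fg n j)

section Helpers
variable (n : ℕ)

lemma q_rel {a b : FA n} (h : qRel n a b) : mk n a = mk n b :=
  RingQuot.mkAlgHom_rel F h

lemma uK_uKinv (i : Fin n) : uK n i * uKinv n i = 1 := by
  simpa [uK, uKinv] using q_rel n (qRel.KKinv i)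

lemma uKinv_uK (i : Fin n) : uKinv n i * uK n i = 1 := by
  simpa [uK, uKinv] using q_rel n (qRel.KinvK i)

lemma uK_comm (i j : Fin n) : Commute (uK n i) (uK n j) := by
  have := q_rel n (qRel.KK i j)
  simpa [uK, commute_iff_eq] using this

lemma inv_comm {a b c : Uq n} (h1 : a * b = 1) (h2 : b * a = 1) (h : Commute a c) :
    Commute b c := by
  have h' : a * c = c * a := h
  change b * c = c * b
  calc b * c = b * c * (a * b) := by rw [h1, mul_one]
    _ = b * (c * a) * b := by simp only [mul_assoc]
    _ = b * (a * c) * b := by rw [h']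
    _ = (b * a) * c * b := by simp only [mul_assoc]
    _ = c * b := by rw [h2, one_mul]

lemma uKinv_uK_comm (i j : Fin n) : Commute (uKinv n i) (uK n j) :=
  inv_comm n (uK_uKinv n i) (uKinv_uK n i) (uK_comm n i j)

lemma uKinv_comm (i j : Fin n) : Commute (uKinv n i) (uKinv n j) :=
  inv_comm n (uK_uKinv n i) (uKinv_uK n i) (uKinv_uK_comm n j i).symm

lemma inv_skew {a b e : Uq n} (m : ℤ) (h1 : a * b = 1) (h2 : b * a = 1)
    (h : a * e = v ^ m • (e * a)) : b * e = v ^ (-m) • (e * b) := by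
  have h3 : e * b = v ^ m • (b * e) := by
    calc e * b = (b * a) * e * b := by rw [h2, one_mul]
      _ = b * (a * e) * b := by simp only [mul_assoc]
      _ = v ^ m • (b * e * (a * b)) := by
        rw [h]; simp only [mul_smul_comm, smul_mul_assoc, mul_assoc]
      _ = _ := by rw [h1, mul_one]
  rw [h3, smul_smul, ← zpow_add₀ v_ne_zero, neg_add_cancel, zpow_zero, one_smul]

lemma prod_skew {a b e : Uq n} (p q : ℤ) (h1 : a * e = v ^ p • (e * a))
    (h2 : b * e = v ^ q • (e * b)) : a * b * e = v ^ (p + q) • (e * (a * b)) := by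
  rw [mul_assoc, h2, mul_smul_comm, ← mul_assoc, h1, smul_mul_assoc, smul_smul, mul_assoc,
    ← zpow_add₀ v_ne_zero, add_comm q p]

lemma cart_eq (i j : Fin (n - 1)) : cart i j = pr (finL i) j + -pr (finR i) j := by
  unfold cart pr finL finR
  simp only [Fin.ext_iff]
  split_ifs <;> omega

/-- Images of the generators. -/
def piGen : SlGen n → Uq n
  | .K j => uK n (finL j) * uKinv n (finR j)
  | .Kinv j => uKinv n (finL j) * uK n (finR j)
  | .E j => uE n j
  | .F j => uF n j

/-- The map on the free algebra. -/
def piFree : SlFA n →ₐ[F] Uq n := FreeAlgebra.lift F (piGen n)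

lemma piFree_K (j : Fin (n - 1)) :
    piFree n (SlPre.K n j) = uK n (finL j) * uKinv n (finR j) := by
  simp [piFree, SlPre.K, piGen]

lemma piFree_Kinv (j : Fin (n - 1)) :
    piFree n (SlPre.Kinv n j) = uKinv n (finL j) * uK n (finR j) := by
  simp [piFree, SlPre.Kinv, piGen]

lemma piFree_E (j : Fin (n - 1)) : piFree n (SlPre.E n j) = uE n j := by
  simp [piFree, SlPre.E, piGen]

lemma piFree_F (j : Fin (n - 1)) : piFree n (SlPre.Fg n j) = uF n j := by
  simp [piFree, SlPre.Fg, piGen]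

lemma piFree_rel {a b : SlFA n} (h : slRel n a b) : piFree n a = piFree n b := by
  induction h with
  | KK i j =>
    simp only [map_mul, piFree_K]
    exact ((uK_comm n _ _).mul_right (uKinv_uK_comm n _ _).symm).mul_left
      ((uKinv_uK_comm n _ _).mul_right (uKinv_comm n _ _))
  | KKinv i =>
    simp only [map_mul, map_one, piFree_K, piFree_Kinv]
    calc _ = uK n (finL i) * (uKinv n (finR i) * uKinv n (finL i)) * uK n (finR i) := by
          simp only [mul_assoc]
      _ = (uK n (finL i) * uKinv n (finL i)) * (uKinv n (finR i) * uK n (finR i)) := by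
          rw [(uKinv_comm n _ _).eq]; simp only [mul_assoc]
      _ = 1 := by rw [uK_uKinv, uKinv_uK, one_mul]
  | KinvK i =>
    simp only [map_mul, map_one, piFree_K, piFree_Kinv]
    calc _ = uKinv n (finL i) * (uK n (finR i) * uK n (finL i)) * uKinv n (finR i) := by
          simp only [mul_assoc]
      _ = (uKinv n (finL i) * uK n (finL i)) * (uK n (finR i) * uKinv n (finR i)) := by
          rw [(uK_comm n _ _).eq]; simp only [mul_assoc]
      _ = 1 := by rw [uK_uKinv, uKinv_uK, one_mul]
  | KE i j =>
    simp only [map_mul, map_smul, piFree_K, piFree_E]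
    have key (k : Fin n) : uK n k * uE n j = v ^ pr k j • (uE n j * uK n k) := by
      simpa only [uK, uKinv, uE, uF, map_mul, map_smul] using q_rel n (qRel.KE k j)
    rw [cart_eq]
    exact prod_skew n _ _ (key _) (inv_skew n _ (uK_uKinv n _) (uKinv_uK n _) (key _))
  | KF i j =>
    simp only [map_mul, map_smul, piFree_K, piFree_F]
    have key (k : Fin n) : uK n k * uF n j = v ^ (-pr k j) • (uF n j * uK n k) := by
      simpa only [uK, uKinv, uE, uF, map_mul, map_smul] using q_rel n (qRel.KF k j)
    rw [cart_eq, neg_add]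
    exact prod_skew n _ _ (key _) (inv_skew n _ (uK_uKinv n _) (uKinv_uK n _) (key _))
  | EF i j =>
    simp only [map_mul, map_smul, map_sub, piFree_K, piFree_Kinv, piFree_E, piFree_F]
    simpa only [uK, uKinv, uE, uF, map_mul, map_smul, map_sub] using q_rel n (qRel.EF i j)
  | EEcomm i j h =>
    simp only [map_mul, piFree_E]
    have := q_rel n (qRel.EEcomm i j h)
    simp only [map_mul, map_sub, map_zero] at this
    exact sub_eq_zero.mp this
  | FFcomm i j h =>
    simp only [map_mul, piFree_F]
    have := q_rel n (qRel.FFcomm i j h)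
    simp only [map_mul, map_sub, map_zero] at this
    exact sub_eq_zero.mp this
  | serreE i j h =>
    simp only [map_mul, map_add, map_sub, map_smul, map_pow, map_zero, piFree_E]
    simpa only [uK, uKinv, uE, uF, map_mul, map_add, map_sub, map_smul, map_pow, map_zero] using
      q_rel n (qRel.serreE i j h)
  | serreF i j h =>
    simp only [map_mul, map_add, map_sub, map_smul, map_pow, map_zero, piFree_F]
    simpa only [uK, uKinv, uE, uF, map_mul, map_add, map_sub, map_smul, map_pow, map_zero] using
      q_rel n (qRel.serreF i j h)

/-- The homomorphism. -/
def piHom : Usl n →ₐ[F] Uq n :=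
  RingQuot.liftAlgHom F ⟨piFree n, fun {_ _} h => piFree_rel n h⟩

lemma piHom_slmk (a : SlFA n) : piHom n (slmk n a) = piFree n a :=
  RingQuot.liftAlgHom_mkAlgHom_apply _ _ _ _

end Helpers

/-- Section 3: there is a unique `F`-algebra homomorphism
`π_n : U_v(sl_n) → U_v(q_n)` with `π_n(K_j) = K_j K_{j+1}⁻¹`,
`π_n(K_j⁻¹) = K_j⁻¹ K_{j+1}`, `π_n(E_j) = E_j` and `π_n(F_j) = F_j`. -/
theorem exists_unique_pi (n : ℕ) (hn : 2 ≤ n) :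
    ∃! φ : Usl n →ₐ[F] Uq n,
      (∀ j : Fin (n - 1), φ (sK n j) = uK n (finL j) * uKinv n (finR j)) ∧
      (∀ j : Fin (n - 1), φ (sKinv n j) = uKinv n (finL j) * uK n (finR j)) ∧
      (∀ j : Fin (n - 1), φ (sE n j) = uE n j) ∧
      (∀ j : Fin (n - 1), φ (sF n j) = uF n j) := by
  refine ⟨piHom n, ⟨fun j => ?_, fun j => ?_, fun j => ?_, fun j => ?_⟩, ?_⟩
  · rw [sK, piHom_slmk, piFree_K]
  · rw [sKinv, piHom_slmk, piFree_Kinv]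
  · rw [sE, piHom_slmk, piFree_E]
  · rw [sF, piHom_slmk, piFree_F]
  · rintro ψ ⟨h1, h2, h3, h4⟩
    apply RingQuot.ringQuot_ext'
    apply FreeAlgebra.hom_ext
    funext g
    cases g with
    | K j => exact (h1 j).trans ((piHom_slmk n _).trans (piFree_K n j)).symm
    | Kinv j => exact (h2 j).trans ((piHom_slmk n _).trans (piFree_Kinv n j)).symm
    | E j => exact (h3 j).trans ((piHom_slmk n _).trans (piFree_E n j)).symm
    | F j => exact (h4 j).trans ((piHom_slmk n _).trans (piFree_F n j)).symm

end QueerPaper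
end
end
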